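/- arXiv:2312.06061 — 6 statements merged into one kernel-verified Lean document; each statement's English description precedes it below -/
import Mathlib

section
/- Every universally flexible loop with the inverse property is a Moufang loop; that is, if Q is an IP loop in which every principal isotope is flexible, then Q satisfies the Moufang identity ((x·y)·z)·y = x·(y·(z·y)) for all x, y, z ∈ Q. -/
/-- A loop `(Q, ·, \, /, 1)`: `mul x y = x·y`, `ld x y = x\y`, `rd x y = x/y`. -/
structure LoopStr (Q : Type*) where
  mul : Q → Q → Q
  ld : Q → Q → Q
  rd : Q → Q → Q
  one : Q
  ld_mul : ∀ x y, ld x (mul x y) = y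
  rd_mul : ∀ x y, rd (mul y x) x = y
  mul_ld : ∀ x y, mul x (ld x y) = y
  mul_rd : ∀ x y, mul (rd y x) x = y
  one_mul : ∀ x, mul one x = x
  mul_one : ∀ x, mul x one = x

/-!
In an inverse property loop, flexibility of the isotope `x ∘ y = (x / u) · (v⁻¹ \ y)` at the
elements `a · u` and `z · u` is a division-free identity in `a`, `v`, `z`, `u`. Comparing it with
its special case `a = 1` shows that `t · u = w · (a · u)` implies `t · (a⁻¹ · u) = w · u`.
For `w = x · y`, `a = z · y`, `u = y⁻¹` and `t = ((x · y) · z) · y` this is the Moufang identity.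
-/

namespace LoopStr

variable {Q : Type*} (L : LoopStr Q)

local infix:70 "∙" => LoopStr.mul L

/-- The flexible law for a loop, applied below to the principal isotopes. -/
def IsFlexible : Prop :=
  ∀ x y, x ∙ (y ∙ x) = (x ∙ y) ∙ x

/-- The principal isotope of a loop at `a`, `b`, with multiplication `x ∘ y = (x / a) · (b \ y)`. -/
def principalIsotope (a b : Q) : LoopStr Q where
  mul x y := L.rd x a ∙ L.ld b y
  ld x y := b ∙ L.ld (L.rd x a) y
  rd y x := L.rd y (L.ld b x) ∙ a
  one := b ∙ a
  ld_mul x y := by rw [L.ld_mul, L.mul_ld]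
  rd_mul x y := by rw [L.rd_mul, L.mul_rd]
  mul_ld x y := by rw [L.ld_mul, L.mul_ld]
  mul_rd x y := by rw [L.rd_mul, L.mul_rd]
  one_mul x := by rw [L.rd_mul, L.mul_ld]
  mul_one x := by rw [L.ld_mul, L.mul_rd]

/-- A loop is universally flexible if flexibility holds in all of its principal isotopes. -/
def IsUniversallyFlexible : Prop :=
  ∀ a b, (L.principalIsotope a b).IsFlexible

/-- The inverse property of a loop, for an inversion map `inv` that is not part of the loop data. -/
structure HasInverseProperty (inv : Q → Q) : Prop where
  inv_mul_cancel_left : ∀ x y, inv x ∙ (x ∙ y) = y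
  mul_inv_cancel_right : ∀ x y, (y ∙ x) ∙ inv x = y

variable {L}

theorem mul_right_cancel {x y z : Q} (h : y ∙ x = z ∙ x) : y = z := by
  rw [← L.rd_mul x y, h, L.rd_mul]

namespace HasInverseProperty

variable {inv : Q → Q} (hL : L.HasInverseProperty inv)

include hL

theorem inv_inv (x : Q) : inv (inv x) = x :=
  calc inv (inv x) = inv (inv x) ∙ (inv x ∙ (x ∙ L.one)) := by
        rw [hL.inv_mul_cancel_left x, L.mul_one]
    _ = x := by rw [hL.inv_mul_cancel_left, L.mul_one]

theorem mul_inv_cancel_left (x y : Q) : x ∙ (inv x ∙ y) = y := by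
  simpa only [hL.inv_inv] using hL.inv_mul_cancel_left (inv x) y

theorem inv_mul_cancel_right (x y : Q) : (y ∙ inv x) ∙ x = y := by
  simpa only [hL.inv_inv] using hL.mul_inv_cancel_right (inv x) y

theorem mul_inv_self (x : Q) : x ∙ inv x = L.one := by
  simpa only [L.one_mul] using hL.mul_inv_cancel_right x L.one

theorem mul_inv_rev (x y : Q) : inv (x ∙ y) = inv y ∙ inv x := by
  have inv_mul_left : inv (x ∙ y) ∙ x = inv y := by
    simpa only [hL.mul_inv_cancel_right] using hL.inv_mul_cancel_left (x ∙ y) (inv y)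
  rw [← inv_mul_left, hL.mul_inv_cancel_right]

theorem ld_eq_inv_mul (x y : Q) : L.ld x y = inv x ∙ y := by
  simpa only [L.mul_ld] using (hL.inv_mul_cancel_left x (L.ld x y)).symm

theorem rd_eq_mul_inv (x y : Q) : L.rd x y = x ∙ inv y := by
  simpa only [L.mul_rd] using (hL.mul_inv_cancel_right y (L.rd x y)).symm

theorem isotope_flexible (hflex : L.IsUniversallyFlexible) (a v z u : Q) :
    a ∙ (v ∙ (z ∙ (v ∙ (a ∙ u)))) = ((a ∙ (v ∙ (z ∙ u))) ∙ inv u) ∙ (v ∙ (a ∙ u)) := by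
  simpa only [principalIsotope, hL.rd_eq_mul_inv, hL.ld_eq_inv_mul, hL.inv_inv,
    hL.mul_inv_cancel_right] using hflex u (inv v) (a ∙ u) (z ∙ u)

theorem isotope_flexible_one (hflex : L.IsUniversallyFlexible) (v z u : Q) :
    v ∙ (z ∙ (v ∙ u)) = ((v ∙ (z ∙ u)) ∙ inv u) ∙ (v ∙ u) := by
  simpa only [L.one_mul] using hL.isotope_flexible hflex L.one v z u

theorem mul_inv_mul_of_mul_eq (hflex : L.IsUniversallyFlexible) {t u w a : Q}
    (h : t ∙ u = w ∙ (a ∙ u)) : t ∙ (inv a ∙ u) = w ∙ u := by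
  set c := inv a ∙ u
  have mul_eq : inv a ∙ (inv w ∙ (t ∙ (inv w ∙ c))) = inv w ∙ c :=
    calc inv a ∙ (inv w ∙ (t ∙ (inv w ∙ c)))
        = ((inv a ∙ (inv w ∙ (t ∙ u))) ∙ inv u) ∙ (inv w ∙ c) :=
          hL.isotope_flexible hflex (inv a) (inv w) t u
      _ = (u ∙ inv u) ∙ (inv w ∙ c) := by
          rw [h, hL.inv_mul_cancel_left, hL.inv_mul_cancel_left]
      _ = inv w ∙ c := by rw [hL.mul_inv_self, L.one_mul]
  have conj_eq_a : (inv w ∙ (t ∙ c)) ∙ inv c = a := by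
    apply mul_right_cancel (L := L) (x := inv w ∙ c)
    calc ((inv w ∙ (t ∙ c)) ∙ inv c) ∙ (inv w ∙ c)
        = inv w ∙ (t ∙ (inv w ∙ c)) := (hL.isotope_flexible_one hflex (inv w) t c).symm
      _ = a ∙ (inv a ∙ (inv w ∙ (t ∙ (inv w ∙ c)))) := (hL.mul_inv_cancel_left a _).symm
      _ = a ∙ (inv w ∙ c) := by rw [mul_eq]
  calc t ∙ c = w ∙ (((inv w ∙ (t ∙ c)) ∙ inv c) ∙ c) := by
        rw [hL.inv_mul_cancel_right, hL.mul_inv_cancel_left]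
    _ = w ∙ (a ∙ c) := by rw [conj_eq_a]
    _ = w ∙ u := by rw [hL.mul_inv_cancel_left]

end HasInverseProperty

end LoopStr

/-- Every universally flexible IP loop is Moufang. -/
theorem uf_ip_is_moufang {Q : Type*} (L : LoopStr Q) (inv : Q → Q)
    (lip : ∀ x y, L.mul (inv x) (L.mul x y) = y)
    (rip : ∀ x y, L.mul (L.mul y x) (inv x) = y)
    -- every principal isotope `x ∘ y = (x/a)·(b\y)` is flexible
    (uf : ∀ a b x y,
      L.mul (L.rd x a) (L.ld b (L.mul (L.rd y a) (L.ld b x)))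
        = L.mul (L.rd (L.mul (L.rd x a) (L.ld b y)) a) (L.ld b x)) :
    ∀ x y z, L.mul (L.mul (L.mul x y) z) y = L.mul x (L.mul y (L.mul z y)) := by
  intro x y z
  have hL : L.HasInverseProperty inv := ⟨lip, rip⟩
  have hflex : L.IsUniversallyFlexible := uf
  set t := L.mul (L.mul (L.mul x y) z) y
  have mul_inv_y : L.mul t (inv y) = L.mul (L.mul x y) (L.mul (L.mul z y) (inv y)) := by
    rw [rip, rip]
  have mul_inv_eq_x : L.mul t (inv (L.mul y (L.mul z y))) = x :=
    calc L.mul t (inv (L.mul y (L.mul z y)))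
        = L.mul t (L.mul (inv (L.mul z y)) (inv y)) := by rw [hL.mul_inv_rev]
      _ = L.mul (L.mul x y) (inv y) := hL.mul_inv_mul_of_mul_eq hflex mul_inv_y
      _ = x := rip y x
  rw [← hL.inv_mul_cancel_right (L.mul y (L.mul z y)) t, mul_inv_eq_x]
end

section
/- Every semi-universally flexible loop with the inverse property is diassociative: if Q is an SUF IP loop, then for all a, b ∈ Q the smallest subset of Q containing a and b and closed under the multiplication · and the inversion x ↦ x⁻¹ is associative (i.e., x·(y·z) = (x·y)·z for all x, y, z in that subset), and hence forms a group under ·. -/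
/-- The smallest subset of `Q` containing `a` and `b` and closed under
multiplication and inversion. -/
inductive Gen {Q : Type*} (L : LoopStr Q) (inv : Q → Q) (a b : Q) : Q → Prop
  | mem_a : Gen L inv a b a
  | mem_b : Gen L inv a b b
  | mul {x y : Q} : Gen L inv a b x → Gen L inv a b y → Gen L inv a b (L.mul x y)
  | inv {x : Q} : Gen L inv a b x → Gen L inv a b (inv x)

/-!
Flexibility of the isotopes says that certain left and right multiplications commute, so each
associating triple `(x, y, z)` yields others, for instance `(x * z, y, z)` associates if and only
if `(x, y, z)` does. Inversion reverses triples, which turns every statement into its mirror image.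
Further triples come from the pentagon formed by the five bracketings of a product of four
elements: four associating edges force the fifth.

First, the left power alternative law `z ^ k * x = z * (z * ⋯ * x)` goes from exponents
`n - 2, n - 1, n` to `n + 1`, since `z ^ (n - 1) * u` and `u` conjugate `z` to the same element.
Then, writing elements as words `a ^ s * (b ^ t * ⋯)`, induction on the length shows that powers of
the generators associate around every word; hence words are closed under inversion and can be
read from either end. A last induction on the length of `u` gives that `(u, x, d)` associates for
words `u`, `x` and a power `d` of a generator. If `u = v * a ^ s` with `d` a power of `a`, this
reduces to `v`; otherwise write `u = v * p` with `p = d * a ^ s`, so that `(u, x, p)` associates if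
`(v, x, p)` does, and remove `a ^ s` from `p` by the pentagon.
-/

/-- An inverse property loop. The division operations are `x / u = x * u⁻¹` and
`u \ x = u⁻¹ * x`, so they need not be part of the structure. -/
class IPLoop (Q : Type*) extends MulOneClass Q, Inv Q where
  inv_mul_cancel_left : ∀ x y : Q, x⁻¹ * (x * y) = y
  mul_inv_cancel_right : ∀ y x : Q, y * x * x⁻¹ = y

namespace IPLoop

section Mul

variable {Q : Type*} [Mul Q] {w x y z : Q}

/-- The triple `(x, y, z)` associates. -/
def Assoc (x y z : Q) : Prop := x * (y * z) = x * y * z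

theorem Assoc.mul_middle (hwxy : Assoc w x y) (hwx : Assoc w x (y * z)) (hxyz : Assoc x y z)
    (hyz : Assoc (w * x) y z) : Assoc w (x * y) z :=
  calc w * (x * y * z) = w * (x * (y * z)) := by rw [hxyz]
    _ = w * x * (y * z) := hwx
    _ = w * x * y * z := hyz
    _ = w * (x * y) * z := by rw [hwxy]

theorem Assoc.mul_right (hwxy : Assoc w x y) (hxyz : Assoc x y z) (hwz : Assoc w (x * y) z)
    (hyz : Assoc (w * x) y z) : Assoc w x (y * z) :=
  calc w * (x * (y * z)) = w * (x * y * z) := by rw [hxyz]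
    _ = w * (x * y) * z := hwz
    _ = w * x * y * z := by rw [hwxy]
    _ = w * x * (y * z) := hyz.symm

theorem Assoc.of_mul_right [IsRightCancelMul Q] (hwx : Assoc w x (y * z)) (hxyz : Assoc x y z)
    (hwz : Assoc w (x * y) z) (hyz : Assoc (w * x) y z) : Assoc w x y :=
  mul_right_cancel (b := z) <|
    calc w * (x * y) * z = w * (x * y * z) := hwz.symm
      _ = w * (x * (y * z)) := by rw [hxyz]
      _ = w * x * (y * z) := hwx
      _ = w * x * y * z := hyz

end Mul

theorem assoc_one_right {Q : Type*} [MulOneClass Q] (x y : Q) : Assoc x y 1 := by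
  simp only [Assoc, mul_one]

theorem assoc_one_middle {Q : Type*} [MulOneClass Q] (x z : Q) : Assoc x 1 z := by
  simp only [Assoc, one_mul, mul_one]

section InverseProperty

variable {Q : Type*} [IPLoop Q] {x y z : Q}

theorem inv_mul_cancel (x : Q) : x⁻¹ * x = 1 := by
  simpa only [mul_one] using inv_mul_cancel_left x 1

instance : InvolutiveInv Q where
  inv_inv x := by
    simpa only [inv_mul_cancel, mul_one] using inv_mul_cancel_left x⁻¹ x

theorem mul_inv_cancel_left (x y : Q) : x * (x⁻¹ * y) = y := by
  simpa only [inv_inv] using inv_mul_cancel_left x⁻¹ y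

theorem inv_mul_cancel_right (y x : Q) : y * x⁻¹ * x = y := by
  simpa only [inv_inv] using mul_inv_cancel_right y x⁻¹

instance : IsCancelMul Q where
  mul_left_cancel x _ _ h := by
    simpa only [inv_mul_cancel_left] using congrArg (x⁻¹ * ·) h
  mul_right_cancel x _ _ h := by
    simpa only [mul_inv_cancel_right] using congrArg (· * x⁻¹) h

theorem mul_inv_rev (x y : Q) : (x * y)⁻¹ = y⁻¹ * x⁻¹ :=
  calc (x * y)⁻¹ = (x * y)⁻¹ * (x * y * y⁻¹) * x⁻¹ := by
        rw [mul_inv_cancel_right x y, mul_inv_cancel_right]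
    _ = y⁻¹ * x⁻¹ := by rw [inv_mul_cancel_left]

theorem one_inv : (1 : Q)⁻¹ = 1 := by
  simpa only [mul_one] using inv_mul_cancel (1 : Q)

theorem assoc_inv_self_left (x y : Q) : Assoc x⁻¹ x y := by
  rw [Assoc, inv_mul_cancel_left, inv_mul_cancel, one_mul]

theorem assoc_inv_self_right (x y : Q) : Assoc x y⁻¹ y := by
  rw [Assoc, inv_mul_cancel, mul_one, inv_mul_cancel_right]

theorem Assoc.inv (h : Assoc x y z) : Assoc z⁻¹ y⁻¹ x⁻¹ := by
  simpa only [Assoc, mul_inv_rev] using (congrArg (·⁻¹) h).symm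

theorem assoc_inv_iff : Assoc z⁻¹ y⁻¹ x⁻¹ ↔ Assoc x y z :=
  ⟨fun h => by simpa only [inv_inv] using h.inv, Assoc.inv⟩

theorem Assoc.inv_mul (h : Assoc x y z) : Assoc x⁻¹ (x * y) z := by
  rw [Assoc, ← h, inv_mul_cancel_left, inv_mul_cancel_left]

/-- Left multiplication as a permutation; its inverse is left multiplication by `x⁻¹`. -/
def mulLeft (x : Q) : Equiv.Perm Q where
  toFun y := x * y
  invFun y := x⁻¹ * y
  left_inv := inv_mul_cancel_left x
  right_inv := mul_inv_cancel_left x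

/-- Right multiplication as a permutation; its inverse is right multiplication by `x⁻¹`. -/
def mulRight (x : Q) : Equiv.Perm Q where
  toFun y := y * x
  invFun y := y * x⁻¹
  left_inv y := mul_inv_cancel_right y x
  right_inv y := inv_mul_cancel_right y x

theorem mulLeft_apply (x y : Q) : mulLeft x y = x * y := rfl

theorem mulRight_apply (x y : Q) : mulRight x y = y * x := rfl

theorem mulLeft_inv (x : Q) : mulLeft x⁻¹ = (mulLeft x)⁻¹ :=
  Equiv.ext fun _ => rfl

theorem mulRight_inv (x : Q) : mulRight x⁻¹ = (mulRight x)⁻¹ :=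
  Equiv.ext fun _ => rfl

theorem mulLeft_one : mulLeft (1 : Q) = 1 := Equiv.ext one_mul

theorem conj_inv_mulLeft (x : Q) : MulAut.conj (Equiv.inv Q) (mulLeft x) = (mulRight x)⁻¹ := by
  ext y
  change (x * y⁻¹)⁻¹ = y * x⁻¹
  rw [mul_inv_rev, inv_inv]

theorem assoc_of_commute (h : Commute (mulLeft x) (mulRight z)) (y : Q) : Assoc x y z :=
  Equiv.congr_fun h.eq y

theorem assoc_iff_of_commute {v w : Q}
    (h : Commute (mulRight w * (mulRight v)⁻¹) (mulLeft x)) : Assoc x y w ↔ Assoc x y v := by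
  have apply_mul (t : Q) : (mulRight w * (mulRight v)⁻¹) (t * v) = t * w :=
    congrArg (· * w) (mul_inv_cancel_right t v)
  have move : (mulRight w * (mulRight v)⁻¹) (x * (y * v)) = x * (y * w) :=
    (Equiv.congr_fun h.eq (y * v)).trans (congrArg (x * ·) (apply_mul y))
  rw [Assoc, Assoc, ← move, ← apply_mul (x * y), EmbeddingLike.apply_eq_iff_eq]

/-- Integer powers, as iterated left multiplications. -/
instance : Pow Q ℤ := ⟨fun z k => (mulLeft z ^ k) 1⟩

theorem zpow_def (z : Q) (k : ℤ) : z ^ k = (mulLeft z ^ k) 1 := rfl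

theorem zpow_zero (z : Q) : z ^ (0 : ℤ) = 1 := rfl

theorem zpow_one (z : Q) : z ^ (1 : ℤ) = z := mul_one z

/-- The left power alternative law `z ^ k * (z ^ m * x) = z ^ (k + m) * x` at a fixed
exponent `k`. -/
def PowAlt (z : Q) (k : ℤ) : Prop := mulLeft (z ^ k) = mulLeft z ^ k

namespace PowAlt

variable {k m : ℤ}

theorem zero (z : Q) : PowAlt z 0 := mulLeft_one

theorem one (z : Q) : PowAlt z 1 := by
  rw [PowAlt, zpow_one, _root_.zpow_one]

theorem mul_eq (h : PowAlt z k) (x : Q) : z ^ k * x = (mulLeft z ^ k) x :=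
  Equiv.congr_fun h x

theorem zpow_mul_zpow (h : PowAlt z k) (m : ℤ) : z ^ k * z ^ m = z ^ (k + m) := by
  rw [h.mul_eq, zpow_def, zpow_def, zpow_add, Equiv.Perm.mul_apply]

theorem zpow_mul_zpow_mul (hk : PowAlt z k) (hm : PowAlt z m) (hkm : PowAlt z (k + m)) (x : Q) :
    z ^ k * (z ^ m * x) = z ^ (k + m) * x := by
  rw [hk.mul_eq, hm.mul_eq, hkm.mul_eq, zpow_add, Equiv.Perm.mul_apply]

theorem zpow_neg (h : PowAlt z k) : z ^ (-k) = (z ^ k)⁻¹ := by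
  rw [zpow_def, _root_.zpow_neg, ← h, ← mulLeft_inv, mulLeft_apply, mul_one]

theorem neg (h : PowAlt z k) : PowAlt z (-k) := by
  rw [PowAlt, h.zpow_neg, mulLeft_inv, h, _root_.zpow_neg]

theorem mulRight_zpow (h : PowAlt z k) : mulRight (z ^ k) = mulRight z ^ k := by
  rw [← inv_inj, ← conj_inv_mulLeft, h, map_zpow, conj_inv_mulLeft, inv_zpow]

theorem mul_zpow_mul_zpow (hk : PowAlt z k) (hm : PowAlt z m) (hkm : PowAlt z (k + m)) (x : Q) :
    x * z ^ k * z ^ m = x * z ^ (k + m) := by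
  rw [← mulRight_apply (z ^ k), ← mulRight_apply (z ^ m), ← mulRight_apply (z ^ (k + m)),
    hk.mulRight_zpow, hm.mulRight_zpow, hkm.mulRight_zpow, add_comm, zpow_add, Equiv.Perm.mul_apply]

theorem mul_zpow_sub_one_mul {n : ℤ} (hn : PowAlt z n) (hn1 : PowAlt z (n - 1))
    (u : Q) : z * (z ^ (n - 1) * u) = z ^ n * u := by
  have := (one z).zpow_mul_zpow_mul hn1 (by rwa [add_sub_cancel]) u
  rwa [zpow_one, add_sub_cancel] at this

end PowAlt

end InverseProperty

/-- Left semi-universal flexibility of an inverse property loop: the isotopes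
`x ∘ y = (x / u) * y` are flexible, where `x / u = x * u⁻¹`. -/
class IsLeftSUF (Q : Type*) [IPLoop Q] : Prop where
  flexible_isotope : ∀ x y u : Q,
    x * u⁻¹ * (y * u⁻¹ * x) = x * u⁻¹ * y * u⁻¹ * x

section SemiUniversallyFlexible

variable {Q : Type*} [IPLoop Q] [IsLeftSUF Q]

theorem left_semiflexible (x y u : Q) : x * u * (y * u * x) = x * u * y * u * x := by
  simpa only [inv_inv] using IsLeftSUF.flexible_isotope x y u⁻¹

theorem right_semiflexible (x y u : Q) : x * (u * (y * (u * x))) = x * (u * y) * (u * x) := by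
  simpa only [mul_inv_rev, inv_inv] using
    (congrArg (·⁻¹) (left_semiflexible x⁻¹ y⁻¹ u⁻¹)).symm

theorem commute_mulRight_mul_mulRight (x u : Q) :
    Commute (mulRight x * mulRight u) (mulLeft (x * u)) :=
  Equiv.ext fun y => (left_semiflexible x y u).symm

theorem commute_mulRight_mulLeft (x : Q) : Commute (mulRight x) (mulLeft x) :=
  Equiv.ext fun y => show x * y * x = x * (y * x) by
    simpa only [mul_one] using (left_semiflexible x y 1).symm

theorem commute_mulRight_mul_mulRight_inv (z v : Q) :
    Commute (mulRight (z * v) * (mulRight v)⁻¹) (mulLeft z) := by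
  simpa only [mulRight_inv, mul_inv_cancel_right] using
    commute_mulRight_mul_mulRight (z * v) v⁻¹

theorem assoc_flexible (x y : Q) : Assoc x y x :=
  assoc_of_commute (commute_mulRight_mulLeft x).symm y

theorem assoc_flexible_inv (x y : Q) : Assoc x⁻¹ y x :=
  assoc_of_commute (mulLeft_inv x ▸ (commute_mulRight_mulLeft x).symm.inv_left) y

namespace PowAlt

variable {v y z : Q} {k m r : ℤ}

theorem assoc_zpow_zpow (hk : PowAlt z k) (hm : PowAlt z m) (y : Q) : Assoc (z ^ k) y (z ^ m) := by
  refine assoc_of_commute ?_ y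
  rw [hk, hm.mulRight_zpow]
  exact (commute_mulRight_mulLeft z).symm.zpow_zpow k m

open scoped Pointwise in
theorem assoc_zpow_mul_right (hr : PowAlt z r) (hk : PowAlt z k) :
    Assoc (z ^ r) y (z ^ k * v) ↔ Assoc (z ^ r) y v := by
  have mem_stabilizer :
      mulLeft z ∈ MulAction.stabilizer (Equiv.Perm Q) {w | Assoc (z ^ r) y w} := by
    refine MulAction.mem_stabilizer_set.2 fun w =>
      (assoc_iff_of_commute ?_ : Assoc (z ^ r) y (z * w) ↔ Assoc (z ^ r) y w)
    rw [hr]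
    exact (commute_mulRight_mul_mulRight_inv z w).zpow_right r
  rw [hk.mul_eq]
  exact MulAction.mem_stabilizer_set.1 (zpow_mem mem_stabilizer k) v

theorem assoc_mul_zpow_left (hr : PowAlt z r) (hk : PowAlt z k) :
    Assoc (v * z ^ k) y (z ^ r) ↔ Assoc v y (z ^ r) := by
  rw [← assoc_inv_iff, mul_inv_rev, ← hr.zpow_neg, ← hk.zpow_neg,
    hr.neg.assoc_zpow_mul_right hk.neg, hr.zpow_neg, assoc_inv_iff]

theorem assoc_mul_base_left (hr : PowAlt z r) : Assoc (v * z) y (z ^ r) ↔ Assoc v y (z ^ r) := by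
  simpa only [zpow_one] using hr.assoc_mul_zpow_left (one z)

end PowAlt

theorem assoc_mul_self_left {x y z : Q} : Assoc (x * z) y z ↔ Assoc x y z := by
  simpa only [zpow_one] using (PowAlt.one z).assoc_mul_base_left (v := x) (y := y)

theorem assoc_mul_inv_self_left {x y z : Q} : Assoc (x * z⁻¹) y z ↔ Assoc x y z := by
  rw [← assoc_mul_self_left, inv_mul_cancel_right]

theorem PowAlt.assoc_inv_mul_zpow {z : Q} {k m : ℤ} (hk : PowAlt z k) (hm : PowAlt z m)
    (hmk : PowAlt z (m + k)) (u : Q) : Assoc (u⁻¹ * z ^ m) (z ^ k) u := by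
  have outer : Assoc (z ^ (-m)) (u⁻¹ * z ^ (m + k)) u := by
    have powers : Assoc (z ^ (-m)) (z ^ (m + k)) u := by
      have hk' : PowAlt z (-m + (m + k)) := by rwa [neg_add_cancel_left]
      rw [Assoc, hm.neg.zpow_mul_zpow, hm.neg.zpow_mul_zpow_mul hmk hk']
    exact (hm.neg.assoc_zpow_zpow hmk u⁻¹).mul_middle
      ((hm.neg.assoc_zpow_mul_right hmk).2 (assoc_inv_self_right _ u))
      (assoc_flexible_inv u _) (assoc_mul_inv_self_left.2 powers)
  have middle : z ^ (-m) * u * (u⁻¹ * z ^ (m + k)) = z ^ k := by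
    rw [← hm.mul_zpow_mul_zpow hk hmk, hm.zpow_neg]
    simpa only [mul_inv_rev, inv_inv] using inv_mul_cancel_left (u⁻¹ * z ^ m) (z ^ k)
  have := (assoc_mul_self_left.2 outer).inv_mul
  rwa [middle, mul_inv_rev, hm.zpow_neg, inv_inv] at this

theorem PowAlt.inv_mul_mul_self {z : Q} {k : ℤ} (hk : PowAlt z k) (hk' : PowAlt z (1 - k))
    (u : Q) : (z ^ k * u)⁻¹ * z * (z ^ k * u) = u⁻¹ * z * u := by
  have hk1 : PowAlt z (1 - k + k) := by rw [sub_add_cancel]; exact one z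
  have h1k : PowAlt z (-k + 1) := by rwa [neg_add_eq_sub]
  have exponent : (z ^ k * u)⁻¹ * z = u⁻¹ * z ^ (1 - k) := by
    have := hk.neg.mul_zpow_mul_zpow (one z) h1k u⁻¹
    rwa [zpow_one, neg_add_eq_sub, hk.zpow_neg, ← mul_inv_rev] at this
  rw [exponent, hk.assoc_inv_mul_zpow hk' hk1 u, hk'.mul_zpow_mul_zpow hk hk1, sub_add_cancel,
    zpow_one]

theorem PowAlt.zpow_mul_mul_inv_mul_mul_self {z : Q} {n : ℤ} (hn : PowAlt z n) (u : Q) :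
    z ^ n * u * (u⁻¹ * z) * u = (mulLeft z ^ (n + 1)) u := by
  have comm : Commute (mulRight u * mulRight (u⁻¹ * z)) (mulLeft z) := by
    simpa only [mul_inv_cancel_left] using commute_mulRight_mul_mulRight u (u⁻¹ * z)
  calc z ^ n * u * (u⁻¹ * z) * u
      = (mulLeft z ^ n) (u * (u⁻¹ * z) * u) := by
        rw [hn.mul_eq]; exact Equiv.congr_fun (comm.zpow_right n).eq u
    _ = (mulLeft z ^ (n + 1)) u := by
        rw [mul_inv_cancel_left, zpow_add, _root_.zpow_one]; rfl

theorem PowAlt.inv_zpow_sub_one_mul_mul {z : Q} {n : ℤ} (hn : PowAlt z n)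
    (hn1 : PowAlt z (n - 1)) (hn2 : PowAlt z (n - 2)) (u : Q) :
    (z ^ (n - 1) * u)⁻¹ * (z ^ n * u) = u⁻¹ * z * u := by
  have hsub : PowAlt z (1 - (n - 1)) := by convert hn2.neg using 1; ring
  rw [← hn.mul_zpow_sub_one_mul hn1, assoc_flexible_inv _ z, hn1.inv_mul_mul_self hsub]

theorem PowAlt.add_one {z : Q} {n : ℤ} (hn : PowAlt z n) (hn1 : PowAlt z (n - 1))
    (hn2 : PowAlt z (n - 2)) : PowAlt z (n + 1) := by
  refine Equiv.ext fun t => ?_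
  obtain ⟨u, rfl⟩ := (mulLeft (z ^ n)).surjective t
  have z_mul_y : z * (z ^ (n - 1) * u) = z ^ n * u := hn.mul_zpow_sub_one_mul hn1 u
  have conj : (z ^ (n - 1) * u)⁻¹ * (z ^ n * u) = u⁻¹ * z * u :=
    hn.inv_zpow_sub_one_mul_mul hn1 hn2 u
  have x_mul_z : z ^ n * z = z ^ (n + 1) := by
    simpa only [zpow_one] using hn.zpow_mul_zpow 1
  set x := z ^ n
  set y := z ^ (n - 1) * u
  have assoc_x_mul_z : Assoc (x * z) (x * u) x :=
    hn.assoc_mul_base_left.2 (assoc_flexible x (x * u))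
  have assoc_y_inv : Assoc y⁻¹ (x * u) x := by
    have y_inv : y⁻¹ = (x * u)⁻¹ * z := by
      rw [← z_mul_y, mul_inv_rev z, inv_mul_cancel_right]
    exact y_inv ▸ hn.assoc_mul_base_left.2 (assoc_inv_self_left (x * u) x)
  have key : z ^ (n + 1) * (x * u) * x = x * (mulLeft z ^ (n + 1)) u * x :=
    calc z ^ (n + 1) * (x * u) * x
        = x * (x * u * y⁻¹) * (x * u * x) := by
          rw [← x_mul_z, ← assoc_x_mul_z, ← z_mul_y, mul_inv_cancel_right]
      _ = x * (x * u * (y⁻¹ * (x * u * x))) := (right_semiflexible x y⁻¹ (x * u)).symm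
      _ = x * (x * u * (u⁻¹ * z * u * x)) := by rw [assoc_y_inv, conj]
      _ = x * (x * u * (u⁻¹ * z) * u * x) := by rw [left_semiflexible]
      _ = x * (mulLeft z ^ (n + 1)) u * x := by
        rw [hn.zpow_mul_mul_inv_mul_mul_self]; exact assoc_flexible x _
  calc z ^ (n + 1) * (x * u) = x * (mulLeft z ^ (n + 1)) u := mul_right_cancel key
    _ = (mulLeft z ^ (n + 1)) (x * u) := by
      rw [hn.mul_eq, hn.mul_eq, ← Equiv.Perm.mul_apply, ← Equiv.Perm.mul_apply,
        (Commute.zpow_zpow_self (mulLeft z) n (n + 1)).eq]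

theorem powAlt (z : Q) (k : ℤ) : PowAlt z k := by
  have window (n : ℕ) : PowAlt z (n - 1 : ℤ) ∧ PowAlt z n ∧ PowAlt z (n + 1 : ℤ) := by
    induction n with
    | zero => exact ⟨(PowAlt.one z).neg, PowAlt.zero z, PowAlt.one z⟩
    | succ n ih =>
      obtain ⟨hn2, hn1, hn⟩ := ih
      push_cast
      rw [add_sub_cancel_right]
      exact ⟨hn1, hn, hn.add_one (by rwa [add_sub_cancel_right]) (by convert hn2 using 1; ring)⟩
  obtain ⟨n, rfl | rfl⟩ := k.eq_nat_or_neg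
  · exact (window n).2.1
  · exact (window n).2.1.neg

theorem zpow_mul_zpow_mul (z : Q) (k m : ℤ) (x : Q) :
    z ^ k * (z ^ m * x) = z ^ (k + m) * x :=
  (powAlt z k).zpow_mul_zpow_mul (powAlt z m) (powAlt z (k + m)) x

theorem mul_zpow_mul_zpow (z : Q) (k m : ℤ) (x : Q) :
    x * z ^ k * z ^ m = x * z ^ (k + m) :=
  (powAlt z k).mul_zpow_mul_zpow (powAlt z m) (powAlt z (k + m)) x

theorem zpow_neg (z : Q) (k : ℤ) : z ^ (-k) = (z ^ k)⁻¹ := (powAlt z k).zpow_neg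

theorem assoc_zpow_zpow (z y : Q) (k m : ℤ) : Assoc (z ^ k) y (z ^ m) :=
  (powAlt z k).assoc_zpow_zpow (powAlt z m) y

theorem zpow_mul_zpow (z : Q) (k m : ℤ) : z ^ k * z ^ m = z ^ (k + m) :=
  (powAlt z k).zpow_mul_zpow m

theorem assoc_zpow_zpow_left (z y : Q) (k m : ℤ) : Assoc (z ^ k) (z ^ m) y := by
  rw [Assoc, zpow_mul_zpow_mul, zpow_mul_zpow]

theorem assoc_zpow_zpow_right (z y : Q) (k m : ℤ) : Assoc y (z ^ k) (z ^ m) := by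
  rw [Assoc, mul_zpow_mul_zpow, zpow_mul_zpow]

theorem assoc_zpow_mul_right {z v y : Q} {r : ℤ} (k : ℤ) :
    Assoc (z ^ r) y (z ^ k * v) ↔ Assoc (z ^ r) y v :=
  (powAlt z r).assoc_zpow_mul_right (powAlt z k)

theorem assoc_mul_zpow_left {z v y : Q} {r : ℤ} (k : ℤ) :
    Assoc (v * z ^ k) y (z ^ r) ↔ Assoc v y (z ^ r) :=
  (powAlt z r).assoc_mul_zpow_left (powAlt z k)

end SemiUniversallyFlexible

section Words

variable {Q : Type*} [IPLoop Q] {g : Bool → Q} {m n : ℕ} {u x y z : Q}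

/-- The products `g i₁ ^ s₁ * (g i₂ ^ s₂ * (⋯ * (g iₙ ^ sₙ * 1)))` of powers of the two elements
`g false` and `g true`. Since the exponents may vanish, shorter words are included. -/
def words (g : Bool → Q) : ℕ → Set Q
  | 0 => {1}
  | n + 1 => {x | ∃ i, ∃ s : ℤ, ∃ y ∈ words g n, g i ^ s * y = x}

theorem zpow_mul_mem_words (hx : x ∈ words g n) (i : Bool) (s : ℤ) :
    g i ^ s * x ∈ words g (n + 1) :=
  ⟨i, s, x, hx, rfl⟩

theorem words_mono : Monotone (words g) :=
  monotone_nat_of_le_succ fun _ x hx => ⟨true, 0, x, hx, by rw [zpow_zero, one_mul]⟩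

theorem zpow_mem_words_one (i : Bool) (s : ℤ) : g i ^ s ∈ words g 1 :=
  ⟨i, s, 1, rfl, mul_one _⟩

/-- The set of all words in `g false` and `g true`, which turns out to be the subloop they
generate. -/
def wordSet (g : Bool → Q) : Set Q := {x | ∃ n, x ∈ words g n}

theorem mem_wordSet_self (i : Bool) : g i ∈ wordSet g :=
  ⟨1, zpow_one (g i) ▸ zpow_mem_words_one i 1⟩

/-- The powers of the two generators associate around every word of length `n`. -/
def AssocAround (g : Bool → Q) (n : ℕ) : Prop :=
  ∀ x ∈ words g n, ∀ (i j : Bool) (s r : ℤ), Assoc (g i ^ s) x (g j ^ r)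

theorem AssocAround.mono (h : AssocAround g n) (hmn : m ≤ n) : AssocAround g m :=
  fun x hx => h x (words_mono hmn hx)

theorem assocAround_zero : AssocAround g 0 := by
  rintro _ rfl i j s r
  exact assoc_one_middle _ _

variable [IsLeftSUF Q]

theorem AssocAround.inv_mem_words (h : AssocAround g n) :
    ∀ {m}, m ≤ n + 1 → ∀ {x}, x ∈ words g m → x⁻¹ ∈ words g m
  | 0, _, _, rfl => one_inv
  | 1, _, _, ⟨i, s, _, rfl, hx⟩ => by
    rw [← hx, mul_one, ← zpow_neg]
    exact zpow_mem_words_one i (-s)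
  | m + 2, hm, _, ⟨i, s, y, hy, hx⟩ => by
    obtain ⟨j, r, w, hw, hwy⟩ := h.inv_mem_words (m := m + 1) (by omega) hy
    have hw' : w⁻¹ ∈ words g m := h.inv_mem_words (by omega) hw
    have hy : y = w⁻¹ * g j ^ (-r) := by rw [← inv_inv y, ← hwy, mul_inv_rev, zpow_neg]
    rw [← hx, hy, h.mono (by omega) w⁻¹ hw' i j s (-r), mul_inv_rev, zpow_neg, inv_inv]
    exact zpow_mul_mem_words
      (h.inv_mem_words (m := m + 1) (by omega) (zpow_mul_mem_words hw' i s)) j r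

theorem AssocAround.exists_mul_zpow_eq (h : AssocAround g n) (hm : m ≤ n)
    (hx : x ∈ words g (m + 1)) : ∃ i, ∃ s : ℤ, ∃ y ∈ words g m, y * g i ^ s = x := by
  obtain ⟨i, s, y, hy, hyx⟩ := h.inv_mem_words (by omega) hx
  exact ⟨i, -s, y⁻¹, h.inv_mem_words (by omega) hy, by
    rw [zpow_neg, ← mul_inv_rev, hyx, inv_inv]⟩

theorem assoc_zpow_mul_left {z v w : Q} {s r : ℤ} (h : Assoc v⁻¹ (z ^ s * v * w) (z ^ r)) :
    Assoc (z ^ s * v) w (z ^ r) := by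
  have := ((assoc_mul_zpow_left (-s)).2 h).inv_mul
  rwa [mul_inv_rev, inv_inv, zpow_neg, inv_inv, ← mul_inv_rev, inv_mul_cancel_left] at this

theorem AssocAround.assoc_zpow_zpow_not (h : AssocAround g (m + 1)) (i : Bool) (s t : ℤ) {k : ℕ}
    (hk : k ≤ m) (hy : y ∈ words g k) : Assoc (g i ^ s) (g (!i) ^ t) y := by
  induction k generalizing y with
  | zero => obtain rfl := hy; exact assoc_one_right _ _
  | succ k ih =>
    obtain ⟨j, r, w, hw, rfl⟩ := h.exists_mul_zpow_eq (by omega) hy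
    have hw' : AssocAround g k := h.mono (by omega)
    have assoc_w : Assoc (g i ^ s) (g (!i) ^ t) w := ih (by omega) hw
    have hbw : g (!i) ^ t * w ∈ words g (k + 1) := zpow_mul_mem_words hw _ t
    refine assoc_w.mul_right (hw' w hw _ j t r) (h.mono (by omega) _ hbw i j s r) ?_
    obtain rfl | rfl := Bool.eq_or_eq_not j i
    · refine assoc_zpow_mul_left ?_
      rw [← assoc_w, ← zpow_neg]
      exact h.mono (by omega) _ (zpow_mul_mem_words hbw j s) _ _ _ _
    · exact (assoc_mul_zpow_left t).2 (hw' w hw i _ s r)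

theorem AssocAround.assoc_zpow_mul_not (h : AssocAround g (m + 1)) (i : Bool) (s t u r : ℤ)
    (hy : y ∈ words g m) : Assoc (g i ^ s) (g (!i) ^ t * (g i ^ u * y)) (g (!i) ^ r) := by
  have hm : AssocAround g m := h.mono m.le_succ
  have assoc_y : Assoc (g i ^ s) (g (!i) ^ t) y := h.assoc_zpow_zpow_not i s t le_rfl hy
  have assoc_mul : Assoc (g i ^ s) (g (!i) ^ t) (y * g (!i) ^ r) :=
    assoc_y.mul_right (assoc_zpow_zpow _ y t r) (h _ (zpow_mul_mem_words hy _ t) i _ s r)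
      ((assoc_mul_zpow_left t).2 (hm y hy i _ s r))
  refine ((assoc_zpow_mul_right u).2 assoc_y).mul_middle ?_ (assoc_zpow_zpow _ _ t r)
    ((assoc_mul_zpow_left t).2 (h _ (zpow_mul_mem_words hy i u) i _ s r))
  rw [← hm y hy i (!i) u r]
  exact (assoc_zpow_mul_right u).2 assoc_mul

theorem AssocAround.succ (h : AssocAround g n) : AssocAround g (n + 1) := by
  rintro _ ⟨c, t, y, hy, rfl⟩ i j s r
  obtain rfl | rfl := Bool.eq_or_eq_not j i
  · exact assoc_zpow_zpow _ _ s r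
  obtain rfl | rfl := Bool.eq_or_eq_not c i
  · exact (assoc_zpow_zpow_left _ _ s t).mul_middle (assoc_zpow_zpow_left _ _ s t)
      (h y hy _ _ t r) (by rw [zpow_mul_zpow]; exact h y hy _ _ (s + t) r)
  cases n with
  | zero => obtain rfl := hy; rw [mul_one]; exact assoc_zpow_zpow_right _ _ t r
  | succ m =>
    obtain ⟨d, v, y, hy, rfl⟩ := hy
    obtain rfl | rfl := Bool.eq_or_eq_not d i
    · exact h.assoc_zpow_mul_not d s t v r hy
    · rw [zpow_mul_zpow_mul]
      exact h _ (zpow_mul_mem_words hy _ (t + v)) i _ s r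

theorem assocAround (g : Bool → Q) : ∀ n, AssocAround g n
  | 0 => assocAround_zero
  | n + 1 => (assocAround g n).succ

theorem inv_mem_words (hx : x ∈ words g n) : x⁻¹ ∈ words g n :=
  (assocAround g n).inv_mem_words n.le_succ hx

theorem exists_mul_zpow_eq (hx : x ∈ words g (n + 1)) :
    ∃ i, ∃ s : ℤ, ∃ y ∈ words g n, y * g i ^ s = x :=
  (assocAround g n).exists_mul_zpow_eq le_rfl hx

theorem mul_zpow_mem_words (hx : x ∈ words g n) (i : Bool) (s : ℤ) :
    x * g i ^ s ∈ words g (n + 1) := by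
  have := inv_mem_words (zpow_mul_mem_words (inv_mem_words hx) i (-s))
  rwa [mul_inv_rev, zpow_neg, inv_inv, inv_inv] at this

theorem inv_mem_wordSet (hx : x ∈ wordSet g) : x⁻¹ ∈ wordSet g :=
  hx.imp fun _ => inv_mem_words

theorem mul_zpow_mem_wordSet (hx : x ∈ wordSet g) (i : Bool) (s : ℤ) :
    x * g i ^ s ∈ wordSet g :=
  let ⟨n, hn⟩ := hx
  ⟨n + 1, mul_zpow_mem_words hn i s⟩

theorem assoc_zpow_wordSet_zpow (hx : x ∈ wordSet g) (i j : Bool) (s r : ℤ) :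
    Assoc (g i ^ s) x (g j ^ r) :=
  let ⟨n, hn⟩ := hx
  assocAround g n x hn i j s r

theorem assoc_zpow_zpow_wordSet (hx : x ∈ wordSet g) (i j : Bool) (s t : ℤ) :
    Assoc (g i ^ s) (g j ^ t) x := by
  obtain rfl | rfl := Bool.eq_or_eq_not j i
  · exact assoc_zpow_zpow_left _ x s t
  · obtain ⟨n, hn⟩ := hx
    exact (assocAround g (n + 1)).assoc_zpow_zpow_not i s t le_rfl hn

theorem assoc_wordSet_zpow_zpow (hx : x ∈ wordSet g) (i j : Bool) (s t : ℤ) :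
    Assoc x (g i ^ s) (g j ^ t) := by
  have := assoc_zpow_zpow_wordSet (inv_mem_wordSet hx) j i (-t) (-s)
  rwa [zpow_neg, zpow_neg, assoc_inv_iff] at this

theorem wordSet_induction_right {motive : Q → Prop} (one : motive 1)
    (mul_zpow : ∀ x ∈ wordSet g, motive x → ∀ i (s : ℤ), motive (x * g i ^ s))
    (hx : x ∈ wordSet g) : motive x := by
  obtain ⟨n, hn⟩ := hx
  induction n generalizing x with
  | zero => obtain rfl := hn; exact one
  | succ n ih =>
    obtain ⟨i, s, y, hy, rfl⟩ := exists_mul_zpow_eq hn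
    exact mul_zpow y ⟨n, hy⟩ (ih hy) i s

theorem mul_mem_wordSet_of_assoc (hu : u ∈ wordSet g)
    (h : ∀ x ∈ wordSet g, u * x ∈ wordSet g → ∀ i (s : ℤ), Assoc u x (g i ^ s))
    (hx : x ∈ wordSet g) : u * x ∈ wordSet g := by
  refine wordSet_induction_right (motive := fun x => u * x ∈ wordSet g) ?_ ?_ hx
  · rwa [mul_one]
  · intro x hx hux i s
    rw [h x hx hux i s]
    exact mul_zpow_mem_wordSet hux i s

/-- Multiplication by `u` on the left commutes, on all words, with multiplication by the powers
of the generators on the right. -/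
def AssocLeft (g : Bool → Q) (u : Q) : Prop :=
  ∀ x ∈ wordSet g, ∀ (i : Bool) (s : ℤ), Assoc u x (g i ^ s)

theorem AssocLeft.mul_mem (h : AssocLeft g u) (hu : u ∈ wordSet g) (hx : x ∈ wordSet g) :
    u * x ∈ wordSet g :=
  mul_mem_wordSet_of_assoc hu (fun x hx _ => h x hx) hx

theorem assocLeft_of_mul_mem (hu : u ∈ wordSet g)
    (h : ∀ x ∈ wordSet g, u * x ∈ wordSet g → ∀ i (s : ℤ), Assoc u x (g i ^ s)) :
    AssocLeft g u :=
  fun x hx => h x hx (mul_mem_wordSet_of_assoc hu h hx)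

theorem AssocLeft.assoc_mul_right {v : Q} (hv : AssocLeft g v) (hvg : v ∈ wordSet g)
    (hx : x ∈ wordSet g) (i j : Bool) (r s : ℤ) : Assoc v x (g i ^ r * g j ^ s) :=
  (hv x hx i r).mul_right (assoc_wordSet_zpow_zpow hx i j r s)
    (hv _ (mul_zpow_mem_wordSet hx i r) j s)
    (assoc_wordSet_zpow_zpow (hv.mul_mem hvg hx) i j r s)

theorem assocLeft_mul_zpow_mul_zpow (hu : u ∈ words g n)
    (h : ∀ v ∈ words g (n + 1), AssocLeft g v) (i j : Bool) (t s : ℤ) :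
    AssocLeft g (u * g i ^ t * g j ^ s) := by
  have hut (t : ℤ) : u * g i ^ t ∈ words g (n + 1) := mul_zpow_mem_words hu i t
  have assoc_last (x) (hx : x ∈ wordSet g) (r : ℤ) :
      Assoc (u * g i ^ t * g j ^ s) x (g j ^ r) :=
    (assoc_mul_zpow_left s).2 (h _ (hut t) x hx j r)
  obtain rfl | rfl := Bool.eq_or_eq_not i j
  · rw [mul_zpow_mul_zpow]
    exact h _ (hut (t + s))
  refine assocLeft_of_mul_mem ⟨_, mul_zpow_mem_words (hut t) j s⟩ fun x hx hux k r => ?_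
  obtain rfl | rfl := Bool.eq_or_eq_not k j
  · exact assoc_last x hx r
  have hv : u * g (!j) ^ (t - r) ∈ words g (n + 1) := hut (t - r)
  have factor : u * g (!j) ^ t * g j ^ s = u * g (!j) ^ (t - r) * (g (!j) ^ r * g j ^ s) := by
    rw [assoc_wordSet_zpow_zpow ⟨_, hv⟩, mul_zpow_mul_zpow, sub_add_cancel]
  have assoc_mul : Assoc (u * g (!j) ^ t * g j ^ s) x (g (!j) ^ r * g j ^ s) := by
    rw [factor, assoc_mul_self_left]
    exact (h _ hv).assoc_mul_right ⟨_, hv⟩ hx _ _ r s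
  exact assoc_mul.of_mul_right (assoc_wordSet_zpow_zpow hx _ _ r s)
    (assoc_last _ (mul_zpow_mem_wordSet hx _ r) s) (assoc_wordSet_zpow_zpow hux _ _ r s)

theorem assocLeft_of_mem_words : ∀ {n : ℕ} {u : Q}, u ∈ words g n → AssocLeft g u
  | 0, _, rfl, x, _, i, s => by rw [Assoc, one_mul, one_mul]
  | 1, _, ⟨i, s, _, rfl, hu⟩, x, hx, j, r => by
    rw [← hu, mul_one]
    exact assoc_zpow_wordSet_zpow hx i j s r
  | n + 2, u, hu, x, hx, k, r => by
    obtain ⟨j, s, v, hv, rfl⟩ := exists_mul_zpow_eq hu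
    obtain ⟨i, t, w, hw, rfl⟩ := exists_mul_zpow_eq hv
    exact assocLeft_mul_zpow_mul_zpow hw (fun v hv => assocLeft_of_mem_words hv) i j t s x hx k r

theorem assocLeft_of_mem_wordSet (hu : u ∈ wordSet g) : AssocLeft g u :=
  let ⟨_, hn⟩ := hu
  assocLeft_of_mem_words hn

theorem mul_mem_wordSet (hx : x ∈ wordSet g) (hy : y ∈ wordSet g) : x * y ∈ wordSet g :=
  (assocLeft_of_mem_wordSet hx).mul_mem hx hy

theorem assoc_of_mem_wordSet (hx : x ∈ wordSet g) (hy : y ∈ wordSet g) (hz : z ∈ wordSet g) :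
    Assoc x y z := by
  refine wordSet_induction_right (assoc_one_right x y) (fun z hz hxyz i s => ?_) hz
  exact hxyz.mul_right (assocLeft_of_mem_wordSet hy z hz i s)
    (assocLeft_of_mem_wordSet hx _ (mul_mem_wordSet hy hz) i s)
    (assocLeft_of_mem_wordSet (mul_mem_wordSet hx hy) z hz i s)

end Words

end IPLoop

section LoopStr

variable {Q : Type*} {L : LoopStr Q} {inv : Q → Q}

/-- The `IPLoop` structure of a loop with an inverse map. -/
abbrev LoopStr.toIPLoop (L : LoopStr Q) (lip : ∀ x y, L.mul (inv x) (L.mul x y) = y)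
    (rip : ∀ x y, L.mul (L.mul y x) (inv x) = y) : IPLoop Q where
  mul := L.mul
  one := L.one
  one_mul := L.one_mul
  mul_one := L.mul_one
  inv := inv
  inv_mul_cancel_left := lip
  mul_inv_cancel_right y x := rip x y

theorem LoopStr.rd_eq_mul_inv (rip : ∀ x y, L.mul (L.mul y x) (inv x) = y) (x u : Q) :
    L.rd x u = L.mul x (inv u) := by
  rw [← rip u (L.rd x u), L.mul_rd]

theorem LoopStr.isLeftSUF (lip : ∀ x y, L.mul (inv x) (L.mul x y) = y)
    (rip : ∀ x y, L.mul (L.mul y x) (inv x) = y)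
    (lsuf : ∀ x y u,
      L.mul (L.rd x u) (L.mul (L.rd y u) x) = L.mul (L.rd (L.mul (L.rd x u) y) u) x) :
    @IPLoop.IsLeftSUF Q (L.toIPLoop lip rip) := by
  simp only [rd_eq_mul_inv rip] at lsuf
  exact @IPLoop.IsLeftSUF.mk Q (L.toIPLoop lip rip) lsuf

theorem Gen.mem_wordSet [IPLoop Q] [IPLoop.IsLeftSUF Q] (mul_def : ∀ x y, L.mul x y = x * y)
    (inv_def : ∀ x, inv x = x⁻¹) {a b x : Q} (hx : Gen L inv a b x) :
    x ∈ IPLoop.wordSet (fun i => cond i a b) := by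
  induction hx with
  | mem_a => exact IPLoop.mem_wordSet_self true
  | mem_b => exact IPLoop.mem_wordSet_self false
  | mul _ _ hx hy => exact mul_def _ _ ▸ IPLoop.mul_mem_wordSet hx hy
  | inv _ hx => exact inv_def _ ▸ IPLoop.inv_mem_wordSet hx

end LoopStr

/-- Every semi-universally flexible IP loop is diassociative. -/
theorem suf_ip_diassociative {Q : Type*} (L : LoopStr Q) (inv : Q → Q)
    (lip : ∀ x y, L.mul (inv x) (L.mul x y) = y)
    (rip : ∀ x y, L.mul (L.mul y x) (inv x) = y)
    -- left semi-universal flexibility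
    (lsuf : ∀ x y u,
      L.mul (L.rd x u) (L.mul (L.rd y u) x)
        = L.mul (L.rd (L.mul (L.rd x u) y) u) x)
    -- right semi-universal flexibility
    (rsuf : ∀ x y v,
      L.mul x (L.ld v (L.mul y (L.ld v x)))
        = L.mul (L.mul x (L.ld v y)) (L.ld v x)) :
    ∀ a b : Q, ∀ x y z : Q, Gen L inv a b x → Gen L inv a b y → Gen L inv a b z →
      L.mul x (L.mul y z) = L.mul (L.mul x y) z := by
  intro a b x y z hx hy hz
  let := L.toIPLoop lip rip
  have := LoopStr.isLeftSUF lip rip lsuf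
  have mem_wordSet {w : Q} (hw : Gen L inv a b w) : w ∈ IPLoop.wordSet (fun i => cond i a b) :=
    hw.mem_wordSet (fun _ _ => rfl) (fun _ => rfl)
  exact IPLoop.assoc_of_mem_wordSet (mem_wordSet hx) (mem_wordSet hy) (mem_wordSet hz)
end

section
/- Let Q be a left semi-universally flexible loop and let a, b, c ∈ Q. Then the following three statements are equivalent: (i) a·(b·c) = (a·b)·c; (ii) (a·b)·(a·c) = a·(b·(a·c)); (iii) (a·b)·(a\c) = a·(b·(a\c)). -/
/-!
In the left principal isotope `x ∘ y = (x / c) · y` the factor `a · c` acts from the left as `a`.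
Flexibility of this isotope at `x = a · c`, `y = b · c` therefore reads
`a · (b · (a · c)) = ((a · (b · c)) / c) · (a · c)`, and cancelling on the right shows that
`(a, b, a · c)` associates exactly when `(a, b, c)` does. Applying this to `a \ c` in place of `c`
treats the triple `(a, b, a \ c)`.
-/

/-- A right quasigroup: a magma whose right translations `x ↦ x * y` are bijective, with inverses
`x ↦ x / y`. -/
class RightQuasigroup (Q : Type*) extends Mul Q, Div Q where
  protected mul_div_cancel_right : ∀ x y : Q, x * y / y = x
  protected div_mul_cancel : ∀ x y : Q, x / y * y = x

/-- Left semi-universal flexibility: every left principal isotope `x ∘ y = x / u * y` satisfies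
`x ∘ (y ∘ x) = (x ∘ y) ∘ x`. -/
def LeftSemiUniversallyFlexible (Q : Type*) [RightQuasigroup Q] : Prop :=
  ∀ x y u : Q, x / u * (y / u * x) = x / u * y / u * x

namespace RightQuasigroup

variable {Q : Type*} [RightQuasigroup Q]

protected theorem eq_div_iff_mul_eq {x y z : Q} : x = z / y ↔ x * y = z where
  mp h := by rw [h, RightQuasigroup.div_mul_cancel]
  mpr h := by rw [← h, RightQuasigroup.mul_div_cancel_right]

instance : IsRightCancelMul Q where
  mul_right_cancel y x z h := by
    rw [← RightQuasigroup.mul_div_cancel_right z y]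
    exact RightQuasigroup.eq_div_iff_mul_eq.mpr h

end RightQuasigroup

namespace LeftSemiUniversallyFlexible

variable {Q : Type*} [RightQuasigroup Q]

theorem mul_mul_mul_eq_div_mul (lsuf : LeftSemiUniversallyFlexible Q) (a b c : Q) :
    a * (b * (a * c)) = a * (b * c) / c * (a * c) := by
  simpa only [RightQuasigroup.mul_div_cancel_right] using lsuf (a * c) (b * c) c

theorem mul_assoc_iff_mul_assoc_mul_left (lsuf : LeftSemiUniversallyFlexible Q) (a b c : Q) :
    a * b * c = a * (b * c) ↔ a * b * (a * c) = a * (b * (a * c)) :=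
  calc a * b * c = a * (b * c)
    _ ↔ a * b = a * (b * c) / c := RightQuasigroup.eq_div_iff_mul_eq.symm
    _ ↔ a * b * (a * c) = a * (b * c) / c * (a * c) := (mul_left_inj (a * c)).symm
    _ ↔ a * b * (a * c) = a * (b * (a * c)) := by rw [lsuf.mul_mul_mul_eq_div_mul]

end LeftSemiUniversallyFlexible

theorem lsuf_assoc_equiv_general {Q : Type*} [RightQuasigroup Q]
    (lsuf : LeftSemiUniversallyFlexible Q) (a b : Q) {c d : Q} (hd : a * d = c) :
    (a * (b * c) = a * b * c ↔ a * b * (a * c) = a * (b * (a * c)))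
    ∧ (a * b * (a * c) = a * (b * (a * c)) ↔ a * b * d = a * (b * d)) := by
  have assoc_c := lsuf.mul_assoc_iff_mul_assoc_mul_left a b c
  have assoc_d := lsuf.mul_assoc_iff_mul_assoc_mul_left a b d
  rw [hd] at assoc_d
  exact ⟨eq_comm.trans assoc_c, assoc_c.symm.trans assoc_d.symm⟩

/-- The right quasigroup underlying a loop. -/
abbrev LoopStr.toRightQuasigroup {Q : Type*} (L : LoopStr Q) : RightQuasigroup Q where
  mul := L.mul
  div := L.rd
  mul_div_cancel_right x y := L.rd_mul y x
  div_mul_cancel x y := L.mul_rd y x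

/-- In a left semi-universally flexible loop, the three associativity
conditions (i), (ii), (iii) are equivalent. -/
theorem lsuf_assoc_equiv {Q : Type*} (L : LoopStr Q)
    (lsuf : ∀ x y u,
      L.mul (L.rd x u) (L.mul (L.rd y u) x)
        = L.mul (L.rd (L.mul (L.rd x u) y) u) x)
    (a b c : Q) :
    (L.mul a (L.mul b c) = L.mul (L.mul a b) c
      ↔ L.mul (L.mul a b) (L.mul a c) = L.mul a (L.mul b (L.mul a c)))
    ∧ (L.mul (L.mul a b) (L.mul a c) = L.mul a (L.mul b (L.mul a c))
      ↔ L.mul (L.mul a b) (L.ld a c) = L.mul a (L.mul b (L.ld a c))) := by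
  let _ := L.toRightQuasigroup
  exact lsuf_assoc_equiv_general lsuf a b (L.mul_ld a c)
end

section
/- Let Q be a left semi-universally flexible loop. Then for all x, y ∈ Q and all integers n, x·(y·xⁿ) = (x·y)·xⁿ, where the integer powers xⁿ are defined left-associatedly by x⁰ = 1, x^(n+1) = x·xⁿ, and x^(n−1) = x\xⁿ. -/
namespace LoopStr

variable {Q : Type*} (L : LoopStr Q)

/-- The triple `(x, y, z)` associates: its associator in the loop is trivial. -/
def Associates (x y z : Q) : Prop :=
  L.mul x (L.mul y z) = L.mul (L.mul x y) z

/-- The left principal isotope `x∘y = (x/u)·y` of the loop at `u`. -/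
def leftIsotope (u x y : Q) : Q :=
  L.mul (L.rd x u) y

/-- A loop is left semi-universally flexible (left SUF) if all its left principal isotopes
satisfy the flexible law `x∘(y∘x) = (x∘y)∘x`. -/
def IsLeftSUF : Prop :=
  ∀ x y u, L.leftIsotope u x (L.leftIsotope u y x) = L.leftIsotope u (L.leftIsotope u x y) x

theorem mul_left_inj {a b : Q} (c : Q) : L.mul a c = L.mul b c ↔ a = b :=
  ⟨fun h => by rw [← L.rd_mul c a, h, L.rd_mul], fun h => h ▸ rfl⟩

theorem rd_eq_iff_eq_mul {a b c : Q} : L.rd a b = c ↔ a = L.mul c b := by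
  rw [← L.mul_left_inj b, L.mul_rd]

theorem associates_one (x y : Q) : L.Associates x y L.one := by
  simp only [Associates, L.mul_one]

variable {L}

theorem IsLeftSUF.mul_mul_mul_left (h : L.IsLeftSUF) (x y u : Q) :
    L.mul x (L.mul y (L.mul x u)) = L.mul (L.rd (L.mul x (L.mul y u)) u) (L.mul x u) := by
  simpa only [leftIsotope, L.rd_mul] using h (L.mul x u) (L.mul y u) u

theorem IsLeftSUF.associates_mul_left_iff (h : L.IsLeftSUF) {x y u : Q} :
    L.Associates x y (L.mul x u) ↔ L.Associates x y u := by
  rw [Associates, h.mul_mul_mul_left, L.mul_left_inj, L.rd_eq_iff_eq_mul, Associates]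

theorem IsLeftSUF.associates_ld_left_iff (h : L.IsLeftSUF) {x y u : Q} :
    L.Associates x y (L.ld x u) ↔ L.Associates x y u := by
  rw [← h.associates_mul_left_iff, L.mul_ld]

end LoopStr

/-- In a left SUF loop, `x·(y·xⁿ) = (x·y)·xⁿ` for all integers `n`,
where integer powers are defined left-associatedly. -/
theorem lsuf_xyxn {Q : Type*} (L : LoopStr Q)
    (lsuf : ∀ x y u,
      L.mul (L.rd x u) (L.mul (L.rd y u) x)
        = L.mul (L.rd (L.mul (L.rd x u) y) u) x)
    (pow : Q → ℤ → Q)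
    (pow_zero : ∀ x, pow x 0 = L.one)
    (pow_succ : ∀ x (n : ℤ), pow x (n + 1) = L.mul x (pow x n))
    (pow_pred : ∀ x (n : ℤ), pow x (n - 1) = L.ld x (pow x n)) :
    ∀ x y : Q, ∀ n : ℤ,
      L.mul x (L.mul y (pow x n)) = L.mul (L.mul x y) (pow x n) := by
  have h : L.IsLeftSUF := lsuf
  intro x y n
  change L.Associates x y (pow x n)
  induction n using Int.induction_on with
  | zero => simpa only [pow_zero] using L.associates_one x y
  | succ n ih => rwa [pow_succ, h.associates_mul_left_iff]
  | pred n ih => rwa [pow_pred, h.associates_ld_left_iff]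
end

section
/- A loop Q with a two-sided inverse map x ↦ x⁻¹ (i.e., 1/x = x\1 = x⁻¹ for all x) satisfies the identity x·(v·(y·(v·x))) = (x·(v·y))·(v·x) for all x, y, v if and only if Q has the left inverse property (x⁻¹·(x·y) = y for all x, y) and every isotope of the form x∘y = x·(v\y) is flexible, i.e., x·(v\(y·(v\x))) = (x·(v\y))·(v\x) for all x, y, v. -/
/-!
Both identities say that all operations `x ∘ y = x·(f v y)` are flexible: the first for
`f v y = v·y`, the second for `f v y = v\y`. Under the left inverse property `v⁻¹·y = v\y` and
`v⁻¹\y = v·y`, so replacing `v` by `v⁻¹` exchanges the two. The first identity at `y = v⁻¹` reads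
`x·(v·(v⁻¹·(v·x))) = x·(v·x)`, and left cancellation yields the left inverse property.
-/

section LeftQuasigroup

variable {Q ι κ : Type*} {mul ld : Q → Q → Q} {inv : Q → Q}

/-- `ld` is a left division for `mul`, i.e. `(Q, mul, ld)` is a left quasigroup. -/
structure IsLeftDivision (mul ld : Q → Q → Q) : Prop where
  ld_mul : ∀ x y, ld x (mul x y) = y
  mul_ld : ∀ x y, mul x (ld x y) = y

/-- The left inverse property (LIP) of `mul` with respect to the map `inv`. -/
def LeftInverseProperty (mul : Q → Q → Q) (inv : Q → Q) : Prop :=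
  ∀ x y, mul (inv x) (mul x y) = y

/-- Every operation `x ∘ y = x·(f v y)` is flexible: `x ∘ (y ∘ x) = (x ∘ y) ∘ x`. For `f = ld` these
operations are the isotopes `x·(v\y)`; for `f = mul` they are `x·(v·y)`. -/
def HasFlexibleTwists (mul : Q → Q → Q) (f : ι → Q → Q) : Prop :=
  ∀ x y v, mul x (f v (mul y (f v x))) = mul (mul x (f v y)) (f v x)

theorem IsLeftDivision.mul_right_injective (hld : IsLeftDivision mul ld) (x : Q) :
    Function.Injective (mul x) :=
  Function.LeftInverse.injective (hld.ld_mul x)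

theorem LeftInverseProperty.mul_inv_eq_ld (hlip : LeftInverseProperty mul inv)
    (mul_ld : ∀ x y, mul x (ld x y) = y) (x y : Q) : mul (inv x) y = ld x y := by
  simpa only [mul_ld] using hlip x (ld x y)

theorem LeftInverseProperty.ld_inv_eq_mul (hlip : LeftInverseProperty mul inv)
    (ld_mul : ∀ x y, ld x (mul x y) = y) (x y : Q) : ld (inv x) y = mul x y := by
  simpa only [hlip x y] using ld_mul (inv x) (mul x y)

theorem HasFlexibleTwists.reindex {f : ι → Q → Q} {g : κ → Q → Q} (hf : HasFlexibleTwists mul f)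
    (σ : κ → ι) (hfg : ∀ v y, f (σ v) y = g v y) : HasFlexibleTwists mul g := fun x y v => by
  simpa only [hfg] using hf x y (σ v)

theorem LeftInverseProperty.hasFlexibleTwists_mul_iff_ld (hlip : LeftInverseProperty mul inv)
    (hld : IsLeftDivision mul ld) : HasFlexibleTwists mul mul ↔ HasFlexibleTwists mul ld :=
  ⟨fun h => h.reindex inv (hlip.mul_inv_eq_ld hld.mul_ld),
    fun h => h.reindex inv (hlip.ld_inv_eq_mul hld.ld_mul)⟩

theorem HasFlexibleTwists.leftInverseProperty {e : Q} (h : HasFlexibleTwists mul mul)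
    (mul_right_injective : ∀ x, Function.Injective (mul x)) (mul_one : ∀ x, mul x e = x)
    (mul_inv : ∀ x, mul x (inv x) = e) : LeftInverseProperty mul inv := fun v x => by
  have h_twist : mul x (mul v (mul (inv v) (mul v x))) = mul x (mul v x) := by
    simpa only [mul_inv, mul_one] using h x (inv v) v
  exact mul_right_injective v (mul_right_injective x h_twist)

theorem rsuf_lip_equiv_general {e : Q} (hld : IsLeftDivision mul ld) (mul_one : ∀ x, mul x e = x)
    (mul_inv : ∀ x, mul x (inv x) = e) :
    HasFlexibleTwists mul mul ↔ LeftInverseProperty mul inv ∧ HasFlexibleTwists mul ld := by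
  refine ⟨fun h => ?_, fun ⟨hlip, h⟩ => (hlip.hasFlexibleTwists_mul_iff_ld hld).2 h⟩
  have hlip := h.leftInverseProperty hld.mul_right_injective mul_one mul_inv
  exact ⟨hlip, (hlip.hasFlexibleTwists_mul_iff_ld hld).1 h⟩

end LeftQuasigroup

/-- A loop with a two-sided inverse satisfies
`x·(v·(y·(v·x))) = (x·(v·y))·(v·x)` iff it has the left inverse property and
every isotope `x ∘ y = x·(v\y)` is flexible. -/
theorem rsuf_lip_equiv {Q : Type*} (L : LoopStr Q) (inv : Q → Q)
    (hinv : ∀ x, L.rd L.one x = inv x ∧ L.ld x L.one = inv x) :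
    (∀ x y v, L.mul x (L.mul v (L.mul y (L.mul v x)))
        = L.mul (L.mul x (L.mul v y)) (L.mul v x))
    ↔ ((∀ x y, L.mul (inv x) (L.mul x y) = y)
        ∧ (∀ x y v, L.mul x (L.ld v (L.mul y (L.ld v x)))
            = L.mul (L.mul x (L.ld v y)) (L.ld v x))) :=
  rsuf_lip_equiv_general ⟨L.ld_mul, L.mul_ld⟩ L.mul_one fun x => by rw [← (hinv x).2, L.mul_ld]
end

section
/- Every commutative semi-universally flexible loop with the inverse property is a Moufang loop: if Q is an SUF IP loop with x·y = y·x for all x, y, then Q satisfies ((x·y)·z)·y = x·(y·(z·y)) for all x, y, z. -/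
/-!
Write `A`, `B`, `C` for the translations by `x`, `y`, `x * y`. Flexibility of the isotopes says that
`C` commutes with `B * A`; substituting inverses, `B` commutes with `C * A⁻¹` and with `A⁻¹ * C`.
Applying these commutation rules to pairs with a known product, such as `x` and `x⁻¹ * t`, and
evaluating at products of `x, y, z` yields first `C⁻¹ * A * B = A⁻¹ * B⁻¹ * C`, and then the closed
form `C = A * B * A⁻¹ * B⁻¹ * A * B`. The latter turns the commutation of `A` with `C * B⁻¹` into
that of `A` with `B * A⁻¹ * B⁻¹`. For the pair `y⁻¹, x` in place of `x, y` this reads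
`B⁻¹ * A * B * A⁻¹ = A * B * A⁻¹ * B⁻¹`, so the closed form collapses to `C = B⁻¹ * A * B * B`,
the Moufang law.
-/

/-- A commutative quasigroup with the inverse property. Both divisions are multiplications by an
inverse and are left out of the signature; no identity element is required. -/
class CommIPQuasigroup (Q : Type*) extends CommMagma Q, Inv Q where
  inv_mul_cancel_left (a b : Q) : a⁻¹ * (a * b) = b

namespace CommIPQuasigroup

section Basic

variable {Q : Type*} [CommIPQuasigroup Q]

attribute [simp] inv_mul_cancel_left

instance : IsLeftCancelMul Q where
  mul_left_cancel a b c h := by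
    rw [← inv_mul_cancel_left a b, ← inv_mul_cancel_left a c]
    exact congrArg (a⁻¹ * ·) h

instance : InvolutiveInv Q where
  inv_inv a := by
    have h : a⁻¹⁻¹ * a = a * a := by
      simpa only [inv_mul_cancel_left] using inv_mul_cancel_left a⁻¹ (a * a)
    exact mul_left_cancel ((mul_comm a a⁻¹⁻¹).trans h)

@[simp]
theorem mul_inv_cancel_left (a b : Q) : a * (a⁻¹ * b) = b := by
  simpa only [inv_inv] using inv_mul_cancel_left a⁻¹ b

theorem eq_inv_mul_iff_mul_eq {a b c : Q} : a = b⁻¹ * c ↔ b * a = c :=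
  ⟨fun h ↦ by rw [h, mul_inv_cancel_left], fun h ↦ by rw [← h, inv_mul_cancel_left]⟩

@[simp]
theorem mul_inv (a b : Q) : (a * b)⁻¹ = a⁻¹ * b⁻¹ := by
  rw [eq_inv_mul_iff_mul_eq, mul_comm]
  calc (a * b)⁻¹ * a = (a * b)⁻¹ * (a * b * b⁻¹) := by
        rw [mul_comm (a * b), mul_comm a b, inv_mul_cancel_left]
    _ = b⁻¹ := inv_mul_cancel_left _ _

end Basic

/-- Every principal isotope `x ∘ y = (x / u) * y` is flexible, where `x / u = x * u⁻¹`. The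
multiplication being commutative, the left and right versions of this notion coincide. -/
class SemiUniversallyFlexible (Q : Type*) [CommIPQuasigroup Q] : Prop where
  flexible (x y u : Q) :
    (x * u⁻¹) * ((y * u⁻¹) * x) = (((x * u⁻¹) * y) * u⁻¹) * x

section Flexible

variable {Q : Type*} [CommIPQuasigroup Q] [SemiUniversallyFlexible Q]

theorem mul_mul_left_comm (a b c : Q) : a * b * (b * (a * c)) = b * (a * (a * b * c)) := by
  have h := SemiUniversallyFlexible.flexible b c a⁻¹
  rw [inv_inv] at h
  rw [mul_comm a b, mul_comm a c, mul_comm b (c * a), h, mul_comm _ b, mul_comm _ a]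

theorem mul_inv_mul_left_comm (a b c : Q) :
    b * (a * b * (a⁻¹ * c)) = a * b * (a⁻¹ * (b * c)) := by
  simpa only [inv_mul_cancel_left] using mul_mul_left_comm a⁻¹ (a * b) c

theorem inv_mul_mul_left_comm (a b c : Q) :
    b * (a⁻¹ * (a * b * c)) = a⁻¹ * (a * b * (b * c)) := by
  simpa only [mul_comm _ a⁻¹, inv_mul_cancel_left] using mul_mul_left_comm (a * b) a⁻¹ c

theorem mul_mul_inv_mul_mul (x y z : Q) :
    y * z * (y⁻¹ * (x * y * z)) = z * (x * (y * z)) := by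
  calc y * z * (y⁻¹ * (x * y * z)) = y * z * (y⁻¹ * (z * (y * x))) := by
        rw [mul_comm z, mul_comm y x]
    _ = z * (y * z * (y⁻¹ * (y * x))) := (mul_inv_mul_left_comm y z (y * x)).symm
    _ = z * (x * (y * z)) := by rw [inv_mul_cancel_left, mul_comm x]

theorem inv_mul_mul_mul (x y z : Q) :
    (x * y)⁻¹ * (x * (y * z)) = x⁻¹ * (y⁻¹ * (x * y * z)) := by
  rw [eq_inv_mul_iff_mul_eq]
  refine mul_left_cancel (a := y * z) ?_
  calc y * z * (x * ((x * y)⁻¹ * (x * (y * z))))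
      = y * z * (x * (x * (y * z) * (x * y)⁻¹)) := by rw [mul_comm (x * y)⁻¹]
    _ = x * (y * z) * (y * z * (x * (x * y)⁻¹)) := (mul_mul_left_comm x (y * z) _).symm
    _ = z * (x * (y * z)) := by
        rw [mul_inv, mul_inv_cancel_left, mul_comm (y * z), inv_mul_cancel_left, mul_comm z]
    _ = y * z * (y⁻¹ * (x * y * z)) := (mul_mul_inv_mul_mul x y z).symm

theorem mul_mul_mul_eq_conj (x y z : Q) :
    x * y * (y * z) = x * (y * (x⁻¹ * (x * y * z))) := by
  rw [inv_mul_mul_left_comm, mul_inv_cancel_left]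

theorem inv_mul_mul_mul_mul (x y z : Q) :
    (x * y * z)⁻¹ * (x * y * (y * z)) = z⁻¹ * (x⁻¹ * (x * y * z)) := by
  have inv_mul_xy : (x * y * z)⁻¹ * (x * y) = z⁻¹ := by
    rw [mul_inv, mul_comm, mul_inv_cancel_left]
  rw [mul_mul_mul_eq_conj]
  generalize x * y * z = q at inv_mul_xy ⊢
  have eval_y : x * q⁻¹ * (y * (x⁻¹ * q)) = y := by
    simpa only [mul_inv, inv_inv, mul_comm y] using inv_mul_cancel_left (x⁻¹ * q) y
  have eval_z : x * q⁻¹ * (q⁻¹ * (x * (y * (x⁻¹ * q)))) = z⁻¹ := by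
    rw [mul_mul_left_comm, eval_y, inv_mul_xy]
  rw [eq_inv_mul_iff_mul_eq.mpr eval_z, mul_inv, inv_inv, mul_comm]

theorem inv_mul_eq_mul_mul (x y z : Q) :
    y⁻¹ * (x * y * z) = x⁻¹ * (x * y * z) * (x * (z * (x * (x * y * z)⁻¹))) := by
  have conj := congrArg Inv.inv (mul_mul_mul_eq_conj x y z)
  have quot := congrArg Inv.inv (inv_mul_mul_mul_mul x y z)
  generalize x * y * (y * z) = v at conj quot
  generalize x * y * z = q at conj quot ⊢
  simp only [mul_inv, inv_inv] at conj quot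
  have eval_y : x⁻¹ * q * (y⁻¹ * (x * q⁻¹)) = y⁻¹ := by
    simpa only [mul_inv, inv_inv, mul_comm y⁻¹] using mul_inv_cancel_left (x⁻¹ * q) y⁻¹
  have flex := mul_mul_left_comm x (x⁻¹ * q) v⁻¹
  rw [mul_inv_cancel_left, quot, conj, mul_inv_cancel_left, eval_y] at flex
  rw [← flex, mul_comm]

theorem inv_mul_mul_mul_mul_eq (x y z : Q) :
    x⁻¹ * (y⁻¹ * (x * y * z)) * (x * y * z) = y * z * (y⁻¹ * (x * y * z)) := by
  have rif := congrArg Inv.inv (inv_mul_mul_mul x y z)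
  generalize x * y * z = q at rif ⊢
  simp only [mul_inv, inv_inv] at rif
  have flex := mul_mul_left_comm x (y * q⁻¹) (x⁻¹ * y⁻¹)
  have eval_q : y * q⁻¹ * y⁻¹ = q⁻¹ := by rw [mul_comm, inv_mul_cancel_left]
  have eval_yz : x * (y * q⁻¹) * (x⁻¹ * y⁻¹) = x⁻¹ * (y⁻¹ * z⁻¹) := by
    rw [← rif, mul_comm, ← mul_inv x y, inv_mul_cancel_left]
  rw [mul_inv_cancel_left, eval_q, eval_yz, mul_inv_cancel_left] at flex
  simpa only [mul_inv, inv_inv, mul_comm (y⁻¹ * q)] using congrArg Inv.inv flex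

theorem inv_mul_mul_inv_mul (x y z : Q) :
    x⁻¹ * (y⁻¹ * (x * y * z)) * (z⁻¹ * (x⁻¹ * (x * y * z))) = y * z := by
  have comm := inv_mul_mul_mul_mul_eq x y z
  have eval_t := inv_mul_eq_mul_mul x y z
  generalize x * y * z = q at comm eval_t ⊢
  generalize y⁻¹ * q = t at comm eval_t ⊢
  have flex := mul_mul_left_comm x (x⁻¹ * t) (x⁻¹ * (z⁻¹ * (x⁻¹ * q)))
  have eval_q : t * (x⁻¹ * (z⁻¹ * (x⁻¹ * q))) = x⁻¹ * q := by
    have h := inv_mul_cancel_left (x * (z * (x * q⁻¹))) (x⁻¹ * q)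
    rw [mul_comm _ (x⁻¹ * q), ← eval_t, mul_comm _ t] at h
    simpa only [mul_inv, inv_inv] using h
  rw [mul_inv_cancel_left x t, mul_inv_cancel_left, eval_q, mul_inv_cancel_left, comm,
    mul_comm (y * z) t] at flex
  exact mul_left_cancel flex

theorem inv_mul_inv_mul_inv_mul (x y z : Q) :
    (x⁻¹ * (y⁻¹ * (x * y * z)))⁻¹ * (y * z) = x⁻¹ * (z⁻¹ * (x * z * y)) := by
  have flex : y * z * ((x * (y * z))⁻¹ * (x * y)) =
      (x * (y * z))⁻¹ * (x * (y * z * y)) := by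
    have eval_yz : x * (x * (y * z))⁻¹ = (y * z)⁻¹ := by rw [mul_inv, mul_inv_cancel_left]
    have h := mul_mul_left_comm x (x * (y * z))⁻¹ (y * z * y)
    rw [eval_yz, inv_mul_cancel_left] at h
    rw [← h, mul_inv_cancel_left]
  calc (x⁻¹ * (y⁻¹ * (x * y * z)))⁻¹ * (y * z)
      = y * z * ((x * (y * z))⁻¹ * (x * y)) := by
        rw [← inv_mul_mul_mul, mul_inv, inv_inv, mul_comm, mul_comm (x * y)]
    _ = (x * (y * z))⁻¹ * (x * (y * z * y)) := flex
    _ = x⁻¹ * ((y * z)⁻¹ * (y * (x * (y * z)))) := by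
        rw [inv_mul_mul_mul, mul_comm y (x * (y * z))]
    _ = x⁻¹ * (z⁻¹ * (x * z * y)) := by
        rw [mul_comm y z, ← mul_mul_inv_mul_mul, inv_mul_cancel_left]

theorem mul_mul_eq_commutator (x y w : Q) :
    x * y * w = x * (y * (x⁻¹ * (y⁻¹ * (x * (y * w))))) := by
  have key : x⁻¹ * (y⁻¹ * (y * w * x)) = y⁻¹ * (x⁻¹ * (y * x * w)) := by
    rw [← inv_mul_inv_mul_inv_mul, eq_inv_mul_iff_mul_eq, inv_mul_mul_inv_mul]
  rw [mul_comm x (y * w), key, mul_inv_cancel_left, mul_inv_cancel_left, mul_comm x y]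

theorem commutator_left_comm (x y w : Q) :
    x * (y * (x⁻¹ * (y⁻¹ * w))) = y * (x⁻¹ * (y⁻¹ * (x * w))) := by
  have h := mul_inv_mul_left_comm y x (x⁻¹ * w)
  simp only [mul_comm y x, mul_mul_eq_commutator x y, mul_inv_cancel_left] at h
  exact mul_left_cancel h

theorem mul_mul_eq_inv_mul (x y z : Q) : x * y * z = y⁻¹ * (x * (y * (y * z))) := by
  have h := commutator_left_comm y⁻¹ x (x * (y * z))
  rw [inv_inv, ← mul_mul_eq_commutator, inv_mul_cancel_left] at h
  exact h.symm

end Flexible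

end CommIPQuasigroup

open CommIPQuasigroup in
theorem comm_suf_ip_moufang_general {Q : Type*} [CommIPQuasigroup Q] [SemiUniversallyFlexible Q]
    (x y z : Q) : x * y * z * y = x * (y * (z * y)) := by
  rw [mul_comm, mul_mul_eq_inv_mul, CommIPQuasigroup.mul_inv_cancel_left, mul_comm z]

namespace LoopStr

variable {Q : Type*} (L : LoopStr Q) {inv : Q → Q}

theorem rd_eq_mul_inv_s17 (rip : ∀ x y, L.mul (L.mul y x) (inv x) = y) (a u : Q) :
    L.rd a u = L.mul a (inv u) := by
  conv_rhs => rw [← L.mul_rd u a, rip]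

/-- The commutative quasigroup with the inverse property carried by a commutative loop `L` with
the inverse map `inv`. -/
abbrev toCommIPQuasigroup (lip : ∀ x y, L.mul (inv x) (L.mul x y) = y)
    (comm : ∀ x y, L.mul x y = L.mul y x) : CommIPQuasigroup Q where
  mul := L.mul
  inv := inv
  mul_comm := comm
  inv_mul_cancel_left := lip

end LoopStr

/-- Every commutative SUF IP loop is Moufang. -/
theorem comm_suf_ip_moufang {Q : Type*} (L : LoopStr Q) (inv : Q → Q)
    (lip : ∀ x y, L.mul (inv x) (L.mul x y) = y)
    (rip : ∀ x y, L.mul (L.mul y x) (inv x) = y)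
    (lsuf : ∀ x y u,
      L.mul (L.rd x u) (L.mul (L.rd y u) x)
        = L.mul (L.rd (L.mul (L.rd x u) y) u) x)
    (rsuf : ∀ x y v,
      L.mul x (L.ld v (L.mul y (L.ld v x)))
        = L.mul (L.mul x (L.ld v y)) (L.ld v x))
    (comm : ∀ x y, L.mul x y = L.mul y x) :
    ∀ x y z, L.mul (L.mul (L.mul x y) z) y = L.mul x (L.mul y (L.mul z y)) := by
  simp only [L.rd_eq_mul_inv_s17 rip] at lsuf
  let _ := L.toCommIPQuasigroup lip comm
  have : CommIPQuasigroup.SemiUniversallyFlexible Q := ⟨lsuf⟩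
  exact comm_suf_ip_moufang_general
end
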